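/- Let H be a Hopf algebra over a field k and suppose r ∈ H satisfies the 1-dimensional partial comodule equations. Then S(r) also satisfies the 1-dimensional partial comodule equations. If moreover the antipode S is bijective, then S⁻¹(r) satisfies them as well. -/

import Mathlib

/-!
The map `τ : a ⊗ b ↦ S(b) ⊗ S(a)` on `H ⊗ H` reverses products, satisfies `Δ(S(r)) = τ(Δ(r))`, and
moves an application of `S` from one tensor factor to the other. Hence `τ` carries the last four of
the five equations for `r` to those for `S(r)`, exchanging the second with the fifth and the third
with the fourth, while `ε ∘ S = ε` takes care of the first. Over a field `τ` is injective as soon as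
`S` is, so the equations for `S(r)` then also imply those for `r`.

The formula for `Δ ∘ S` holds because, in the convolution algebra of linear maps `H → H ⊗ H`, both
`Δ ∘ S` and `τ ∘ Δ` are inverse to `Δ`: with `i₁`, `i₂` the two inclusions `H → H ⊗ H` and `*` the
convolution product, `Δ = i₁ * i₂` and `τ ∘ Δ = (i₂ ∘ S) * (i₁ ∘ S)`.
-/

open TensorProduct

/-- The five 1-dimensional partial comodule equations for an element `r` of a Hopf
algebra `H`: `ε(r) = 1`; `r ⊗ r·S(r) = r₍₁₎ ⊗ r₍₂₎·S(r)`; `r·S(r₍₁₎) ⊗ r₍₂₎ = r·S(r) ⊗ r`;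
`r ⊗ S(r)·r = r₍₁₎ ⊗ S(r₍₂₎)·r`; `S(r)·r ⊗ r = S(r)·r₍₁₎ ⊗ r₍₂₎`. -/
def OneDimPCM (k : Type*) {H : Type*} [Field k] [Ring H] [HopfAlgebra k H] (r : H) : Prop :=
  Coalgebra.counit (R := k) r = 1
  ∧ r ⊗ₜ[k] (r * HopfAlgebra.antipode (R := k) r)
      = Coalgebra.comul (R := k) r * ((1 : H) ⊗ₜ[k] HopfAlgebra.antipode (R := k) r)
  ∧ (r ⊗ₜ[k] (1 : H)) *
        (LinearMap.rTensor H (HopfAlgebra.antipode (R := k)) (Coalgebra.comul (R := k) r))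
      = (r * HopfAlgebra.antipode (R := k) r) ⊗ₜ[k] r
  ∧ r ⊗ₜ[k] (HopfAlgebra.antipode (R := k) r * r)
      = (LinearMap.lTensor H (HopfAlgebra.antipode (R := k)) (Coalgebra.comul (R := k) r))
          * ((1 : H) ⊗ₜ[k] r)
  ∧ (HopfAlgebra.antipode (R := k) r * r) ⊗ₜ[k] r
      = ((HopfAlgebra.antipode (R := k) r) ⊗ₜ[k] (1 : H)) * Coalgebra.comul (R := k) r

open Coalgebra HopfAlgebra WithConv
open Algebra.TensorProduct (includeLeft includeRight)

section AntipodeSwap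

variable {R A B : Type*} [CommSemiring R] [Semiring A] [Semiring B] [HopfAlgebra R A]
  [HopfAlgebra R B]

variable (R A B) in
/-- The linear map `a ⊗ b ↦ S(b) ⊗ S(a)`, i.e. `S ⊗ S` followed by the flip. For `A = B` it turns
statements about `r` into statements about `S(r)`. -/
noncomputable def antipodeSwap : A ⊗[R] B →ₗ[R] B ⊗[R] A :=
  (TensorProduct.comm R A B).toLinearMap ∘ₗ TensorProduct.map (antipode R) (antipode R)

@[simp]
lemma antipodeSwap_tmul (a : A) (b : B) :
    antipodeSwap R A B (a ⊗ₜ b) = antipode R b ⊗ₜ antipode R a := rfl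

lemma antipodeSwap_mul_antidistrib (x y : A ⊗[R] B) :
    antipodeSwap R A B (x * y) = antipodeSwap R A B y * antipodeSwap R A B x := by
  induction x with
  | zero => simp
  | add x x' hx hx' => simp only [add_mul, mul_add, map_add, hx, hx']
  | tmul a b =>
    induction y with
    | zero => simp
    | add y y' hy hy' => simp only [add_mul, mul_add, map_add, hy, hy']
    | tmul c d => simp [antipode_mul_antidistrib]

lemma antipodeSwap_rTensor_antipode (x : A ⊗[R] B) :
    antipodeSwap R A B ((antipode R).rTensor B x) =
      (antipode R).lTensor B (antipodeSwap R A B x) := by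
  induction x with
  | zero => simp
  | add x x' hx hx' => simp only [map_add, hx, hx']
  | tmul a b => simp

lemma antipodeSwap_lTensor_antipode (x : A ⊗[R] B) :
    antipodeSwap R A B ((antipode R).lTensor A x) =
      (antipode R).rTensor A (antipodeSwap R A B x) := by
  induction x with
  | zero => simp
  | add x x' hx hx' => simp only [map_add, hx, hx']
  | tmul a b => simp

lemma antipodeSwap_injective [Module.Flat R A] [Module.Flat R B]
    (hA : Function.Injective (antipode R (A := A)))
    (hB : Function.Injective (antipode R (A := B))) :
    Function.Injective (antipodeSwap R A B) :=
  (TensorProduct.comm R A B).injective.comp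
    (TensorProduct.map_injective_of_flat_flat _ _ hA hB)

end AntipodeSwap

section Comul

variable {R A : Type*} [CommSemiring R] [Semiring A]

lemma comul_eq_includeLeft_convMul_includeRight [Bialgebra R A] :
    toConv (comul (R := R) (A := A)) =
      toConv (includeLeft : A →ₐ[R] A ⊗[R] A).toLinearMap *
        toConv (includeRight : A →ₐ[R] A ⊗[R] A).toLinearMap := by
  ext a
  rw [(ℛ R a).convMul_apply]
  simp [(ℛ R a).eq]

variable [HopfAlgebra R A]

lemma algHom_comp_antipode_convMul_algHom {B : Type*} [Semiring B] [Algebra R B]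
    (f : A →ₐ[R] B) :
    toConv (f.toLinearMap ∘ₗ antipode R) * toConv f.toLinearMap = 1 := by
  ext a
  rw [(ℛ R a).convMul_apply]
  simp [← map_mul, ← map_sum, sum_antipode_mul_eq_algebraMap_counit]

lemma antipodeSwap_comp_comul :
    toConv (antipodeSwap R A A ∘ₗ comul) =
      toConv ((includeRight : A →ₐ[R] A ⊗[R] A).toLinearMap ∘ₗ antipode R) *
        toConv ((includeLeft : A →ₐ[R] A ⊗[R] A).toLinearMap ∘ₗ antipode R) := by
  ext a
  rw [(ℛ R a).convMul_apply]
  simp [← (ℛ R a).eq]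

lemma antipodeSwap_comp_comul_convMul_comul :
    toConv (antipodeSwap R A A ∘ₗ comul) * toConv comul = 1 := by
  rw [antipodeSwap_comp_comul, comul_eq_includeLeft_convMul_includeRight, mul_assoc,
    ← mul_assoc (toConv (includeLeft.toLinearMap ∘ₗ _)),
    algHom_comp_antipode_convMul_algHom, one_mul, algHom_comp_antipode_convMul_algHom]

lemma comul_antipode (a : A) :
    comul (R := R) (antipode R a) = antipodeSwap R A A (comul a) := by
  have h := left_inv_eq_right_inv antipodeSwap_comp_comul_convMul_comul
    (LinearMap.comul_right_inv (R := R) (C := A))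
  exact LinearMap.congr_fun (toConv_injective h.symm) a

end Comul

section OneDimPCM

variable {k H : Type*} [Field k] [Ring H] [HopfAlgebra k H] {r : H}

lemma oneDimPCM_antipode_iff :
    OneDimPCM k (antipode k r) ↔
      counit (R := k) r = 1
      ∧ antipodeSwap k H H (r ⊗ₜ (r * antipode k r))
          = antipodeSwap k H H (comul r * (1 ⊗ₜ antipode k r))
      ∧ antipodeSwap k H H ((r ⊗ₜ 1) * (antipode k).rTensor H (comul r))
          = antipodeSwap k H H ((r * antipode k r) ⊗ₜ r)
      ∧ antipodeSwap k H H (r ⊗ₜ (antipode k r * r))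
          = antipodeSwap k H H ((antipode k).lTensor H (comul r) * (1 ⊗ₜ r))
      ∧ antipodeSwap k H H ((antipode k r * r) ⊗ₜ r)
          = antipodeSwap k H H ((antipode k r ⊗ₜ 1) * comul r) := by
  simp only [OneDimPCM, antipodeSwap_mul_antidistrib, antipodeSwap_rTensor_antipode,
    antipodeSwap_lTensor_antipode, antipodeSwap_tmul, comul_antipode, counit_antipode,
    antipode_mul_antidistrib, antipode_one]
  constructor <;> exact fun ⟨h₁, h₂, h₃, h₄, h₅⟩ ↦ ⟨h₁, h₅, h₄.symm, h₃.symm, h₂⟩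

lemma OneDimPCM.antipode (hr : OneDimPCM k r) : OneDimPCM k (antipode k r) :=
  have ⟨h₁, h₂, h₃, h₄, h₅⟩ := hr
  oneDimPCM_antipode_iff.2 ⟨h₁, congrArg _ h₂, congrArg _ h₃, congrArg _ h₄, congrArg _ h₅⟩

lemma OneDimPCM.of_antipode (hS : Function.Injective (HopfAlgebra.antipode k (A := H)))
    (hr : OneDimPCM k (HopfAlgebra.antipode k r)) : OneDimPCM k r :=
  have ⟨h₁, h₂, h₃, h₄, h₅⟩ := oneDimPCM_antipode_iff.1 hr
  have hτ := antipodeSwap_injective hS hS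
  ⟨h₁, hτ h₂, hτ h₃, hτ h₄, hτ h₅⟩

end OneDimPCM

theorem stmt8_general (k H : Type*) [Field k] [Ring H] [HopfAlgebra k H]
    (r : H) (hr : OneDimPCM k r) :
    OneDimPCM k (antipode k r)
    ∧ (Function.Injective (antipode k (A := H)) →
        ∀ r' : H, antipode k r' = r → OneDimPCM k r') :=
  ⟨hr.antipode, fun hS _ hr' ↦ .of_antipode hS (hr' ▸ hr)⟩

/-- if `r ∈ H` satisfies the 1-dimensional partial comodule equations, then so
does `S(r)`; and if the antipode is bijective, so does `S⁻¹(r)` (i.e. any preimage of `r`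
under `S`). -/
theorem stmt8 (k H : Type*) [Field k] [Ring H] [HopfAlgebra k H]
    (r : H) (hr : OneDimPCM k r) :
    OneDimPCM k (HopfAlgebra.antipode (R := k) r)
    ∧ (Function.Bijective (HopfAlgebra.antipode (R := k) (A := H)) →
        ∀ r' : H, HopfAlgebra.antipode (R := k) r' = r → OneDimPCM k r') :=
  (stmt8_general k H r hr).imp_right fun h hS ↦ h hS.injective
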